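/- arXiv:2101.01680 — 2 statements merged into one kernel-verified Lean document; each statement's English description precedes it below -/
import Mathlib

section
/- For every α ∈ (0,2), ρ_α(t₀(α)) = −sin(2π/(α+2)) · ∫₀^1 √(1−ξ^α) dξ, and in particular ρ_α(t₀(α)) < 0. -/
open MeasureTheory Set

/-- `t₀(α) = 2πα/(α+2)`. -/
noncomputable def t0 (α : ℝ) : ℝ := 2 * Real.pi * α / (α + 2)

/-- `Z₀(θ) = (sin t₀(α) / sin θ)^(1/α)`. -/
noncomputable def Z0 (α θ : ℝ) : ℝ := (Real.sin (t0 α) / Real.sin θ) ^ (1 / α)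

/-!
At `θ = t₀` the radicand is `e^{it₀} (t^α - 1)` and the upper limit `Z₀(t₀)` is `1`, so the
prescribed branch of the root is the explicit function `-i e^{it₀/2} √(1 - t^α)`. The real part of
its integral is `sin (t₀/2) ∫₀¹ √(1 - ξ^α)`. Since `t₀/2 + t₀/α = π`, the sines of `t₀/2` and
`t₀/α = 2π/(α+2)` coincide, and the two terms of `ρ(t₀)` combine with coefficient `1 - 2 = -1`.
-/

section

variable {α : ℝ}

theorem t0_pos (hα : 0 < α) : 0 < t0 α := by
  unfold t0
  positivity

theorem t0_lt_pi (hα : -2 < α) (hα2 : α < 2) : t0 α < Real.pi := by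
  rw [t0, div_lt_iff₀ (by linarith)]
  nlinarith [Real.pi_pos]

theorem t0_lt_pi_mul (hα : 0 < α) : t0 α < Real.pi * α := by
  rw [t0, div_lt_iff₀ (by linarith)]
  nlinarith [mul_pos (mul_pos Real.pi_pos hα) hα]

theorem t0_mem_Ico (hα : 0 < α) (hα2 : α < 2) :
    t0 α ∈ Ico (t0 α) (min Real.pi (Real.pi * α)) :=
  ⟨le_rfl, lt_min (t0_lt_pi (by linarith) hα2) (t0_lt_pi_mul hα)⟩

theorem t0_div_self (hα : α ≠ 0) : t0 α / α = 2 * Real.pi / (α + 2) := by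
  unfold t0
  field_simp

theorem t0_div_two_add_two_pi_div (hα : α + 2 ≠ 0) :
    t0 α / 2 + 2 * Real.pi / (α + 2) = Real.pi := by
  unfold t0
  field_simp

theorem sin_t0_div_two (hα : α + 2 ≠ 0) :
    Real.sin (t0 α / 2) = Real.sin (2 * Real.pi / (α + 2)) := by
  rw [eq_sub_of_add_eq (t0_div_two_add_two_pi_div hα), Real.sin_pi_sub]

theorem sin_two_pi_div_pos (hα : 0 < α) : 0 < Real.sin (2 * Real.pi / (α + 2)) := by
  refine Real.sin_pos_of_pos_of_lt_pi (by positivity) ?_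
  rw [div_lt_iff₀ (by linarith)]
  nlinarith [mul_pos Real.pi_pos hα]

theorem Z0_t0 (h : Real.sin (t0 α) ≠ 0) : Z0 α (t0 α) = 1 := by
  rw [Z0, div_self h, Real.one_rpow]

theorem continuous_sqrt_one_sub_rpow (hα : 0 ≤ α) : Continuous fun t : ℝ => √(1 - t ^ α) :=
  (continuous_const.sub (Real.continuous_rpow_const hα)).sqrt

theorem integral_sqrt_one_sub_rpow_pos (hα : 0 < α) : 0 < ∫ ξ in (0 : ℝ)..1, √(1 - ξ ^ α) :=
  intervalIntegral.intervalIntegral_pos_of_pos_on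
    ((continuous_sqrt_one_sub_rpow hα.le).intervalIntegrable _ _)
    (fun _ hξ => Real.sqrt_pos.2 (sub_pos.2 (Real.rpow_lt_one hξ.1.le hξ.2 hα))) one_pos

/-- The continuous branch on `[0, 1]` of the square root of `e^{iφ} (t ^ α - 1)` that starts at
`-i e^{iφ/2}`; for `φ = t₀` it is the integrand in `ρ(t₀)`. When `α > 0`, it takes the junk value
`0` for `t > 1`. -/
noncomputable def sqrtBranch (α φ t : ℝ) : ℂ :=
  -Complex.I * Complex.exp (Complex.I * ((φ / 2 : ℝ) : ℂ)) * (√(1 - t ^ α) : ℝ)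

theorem continuous_sqrtBranch (hα : 0 ≤ α) (φ : ℝ) : Continuous (sqrtBranch α φ) :=
  continuous_const.mul (Complex.continuous_ofReal.comp (continuous_sqrt_one_sub_rpow hα))

theorem sqrtBranch_zero (hα : α ≠ 0) (φ : ℝ) :
    sqrtBranch α φ 0 = -Complex.I * Complex.exp (Complex.I * ((φ / 2 : ℝ) : ℂ)) := by
  simp [sqrtBranch, Real.zero_rpow hα]

theorem sqrtBranch_sq (hα : 0 ≤ α) (φ : ℝ) {t : ℝ} (ht : t ∈ Icc (0 : ℝ) 1) :
    sqrtBranch α φ t ^ 2 = Complex.exp (Complex.I * (φ : ℂ)) * ((t ^ α : ℝ) : ℂ)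
      - Complex.exp (Complex.I * (φ : ℂ)) := by
  have hexp : Complex.exp (Complex.I * ((φ / 2 : ℝ) : ℂ)) ^ 2 =
      Complex.exp (Complex.I * (φ : ℂ)) := by
    rw [← Complex.exp_nat_mul]
    congr 1
    push_cast
    ring
  have hsqrt : ((√(1 - t ^ α) : ℝ) : ℂ) ^ 2 = 1 - ((t ^ α : ℝ) : ℂ) := by
    rw [← Complex.ofReal_pow, Real.sq_sqrt (sub_nonneg.2 (Real.rpow_le_one ht.1 ht.2 hα)),
      Complex.ofReal_sub, Complex.ofReal_one]
  rw [sqrtBranch, mul_pow, mul_pow, hexp, hsqrt, neg_sq, Complex.I_sq]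
  ring

theorem re_neg_I_mul_exp_I_mul (x : ℝ) :
    (-Complex.I * Complex.exp (Complex.I * (x : ℂ))).re = Real.sin x := by
  rw [mul_comm Complex.I (x : ℂ), neg_mul, Complex.neg_re, Complex.I_mul_re, neg_neg,
    Complex.exp_ofReal_mul_I_im]

theorem re_integral_sqrtBranch (α φ a b : ℝ) :
    (∫ t in a..b, sqrtBranch α φ t).re = Real.sin (φ / 2) * ∫ t in a..b, √(1 - t ^ α) := by
  simp only [sqrtBranch]
  rw [intervalIntegral.integral_const_mul, intervalIntegral.integral_ofReal,
    Complex.re_mul_ofReal, re_neg_I_mul_exp_I_mul]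

end

/-- for every `α ∈ (0,2)`,
`ρ_α(t₀(α)) = −sin(2π/(α+2)) · ∫₀¹ √(1−ξ^α) dξ < 0`. -/
theorem stmt17 (α : ℝ) (hα0 : 0 < α) (hα2 : α < 2) (ρ : ℝ → ℝ)
    (hρ : ∀ θ ∈ Set.Ico (t0 α) (min Real.pi (Real.pi * α)), ∀ g : ℝ → ℂ,
      ContinuousOn g (Set.Icc 0 (Z0 α θ)) →
      (∀ t ∈ Set.Icc (0 : ℝ) (Z0 α θ),
        g t ^ 2 = Complex.exp (Complex.I * (θ : ℂ)) * ((t ^ α : ℝ) : ℂ)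
          - Complex.exp (Complex.I * ((t0 α : ℝ) : ℂ))) →
      g 0 = -Complex.I * Complex.exp (Complex.I * ((t0 α / 2 : ℝ) : ℂ)) →
      ρ θ = (∫ t in (0 : ℝ)..(Z0 α θ), g t).re
        - 2 * Real.sin (θ / α) * ∫ ξ in (0 : ℝ)..1, Real.sqrt (1 - ξ ^ α)) :
    ρ (t0 α) = -Real.sin (2 * Real.pi / (α + 2)) * ∫ ξ in (0 : ℝ)..1, Real.sqrt (1 - ξ ^ α) ∧
    ρ (t0 α) < 0 := by
  have hZ0 : Z0 α (t0 α) = 1 :=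
    Z0_t0 (Real.sin_pos_of_pos_of_lt_pi (t0_pos hα0) (t0_lt_pi (by linarith) hα2)).ne'
  have hρ0 := hρ (t0 α) (t0_mem_Ico hα0 hα2) (sqrtBranch α (t0 α))
    (continuous_sqrtBranch hα0.le _).continuousOn
    (fun t ht => sqrtBranch_sq hα0.le _ (hZ0 ▸ ht)) (sqrtBranch_zero hα0.ne' _)
  rw [hZ0, re_integral_sqrtBranch, sin_t0_div_two (by positivity), t0_div_self hα0.ne'] at hρ0
  have hvalue : ρ (t0 α) =
      -Real.sin (2 * Real.pi / (α + 2)) * ∫ ξ in (0 : ℝ)..1, √(1 - ξ ^ α) := by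
    rw [hρ0]
    ring
  refine ⟨hvalue, ?_⟩
  rw [hvalue]
  exact mul_neg_of_neg_of_pos (neg_neg_of_pos (sin_two_pi_div_pos hα0))
    (integral_sqrt_one_sub_rpow_pos hα0)
end

section
/- If 1 ≤ α < 2, then ρ_α(θ) → +∞ as θ → π from the left. If 0 < α < 1, then ρ_α(θ) converges to a finite limit as θ → πα from the left, and this limit is strictly positive. In particular, for every α ∈ (0,2) the function ρ_α takes strictly positive values on [t₀(α), min(π, πα)). -/
/-!
On `[0, Z₀(θ)]` the radicand `e^{iθ} t^α - e^{it₀}` stays in the closed lower half-plane, where the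
square root in the closed fourth quadrant is continuous; so this root is the branch `g_θ`, and its
real part is that of the principal root, which is continuous on all of `ℂ`. From
`|Im w| ≤ 2 √|w| Re √w` and `|w| ≤ 1 + Z₀ ^ α` one gets
`∫ Re g_θ ≥ sin t₀ · α / (α + 1) · Z₀ / (2 √(1 + Z₀ ^ α))`.
As `θ → π⁻` the endpoint `Z₀` tends to `∞`, and so does this bound because `α < 2`. For `α < 1` the
integral is continuous and positive at `θ = πα`, where the subtracted term vanishes.
-/

open MeasureTheory Set Filter

open scoped Real Topology ComplexConjugate

section SquareRoot

lemma continuous_re_sqrt : Continuous fun z : ℂ => z.sqrt.re := by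
  simp only [Complex.sqrt, Complex.cpow_inv_two_re]
  fun_prop

lemma sq_sqrt (z : ℂ) : z.sqrt ^ 2 = z :=
  Complex.cpow_ofNat_inv_pow z 2

lemma norm_sqrt (z : ℂ) : ‖z.sqrt‖ = √‖z‖ := by
  rw [eq_comm, Real.sqrt_eq_iff_eq_sq (norm_nonneg _) (norm_nonneg _), ← norm_pow, sq_sqrt]

lemma re_sqrt_nonneg (z : ℂ) : 0 ≤ z.sqrt.re := by
  rw [Complex.sqrt, Complex.cpow_inv_two_re]
  positivity

lemma abs_im_le_two_mul_sqrt_norm_mul_re_sqrt (z : ℂ) :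
    |z.im| ≤ 2 * √‖z‖ * z.sqrt.re := by
  have him : z.im = 2 * z.sqrt.im * z.sqrt.re := by
    conv_lhs => rw [← sq_sqrt z, sq, Complex.mul_im]
    ring
  rw [him, abs_mul, abs_mul, abs_two, abs_of_nonneg (re_sqrt_nonneg z), ← norm_sqrt]
  gcongr
  exacts [re_sqrt_nonneg z, Complex.abs_im_le_norm _]

/-- The square root with values in the closed fourth quadrant for `z` in the closed lower
half-plane. It differs from `Complex.sqrt` on the negative real axis only, where it is continuous
from below. -/
noncomputable def lowerSqrt (z : ℂ) : ℂ := conj (conj z).sqrt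

lemma sq_lowerSqrt (z : ℂ) : lowerSqrt z ^ 2 = z := by
  rw [lowerSqrt, ← map_pow, sq_sqrt, Complex.conj_conj]

lemma re_lowerSqrt (z : ℂ) : (lowerSqrt z).re = z.sqrt.re := by
  simp only [lowerSqrt, Complex.sqrt, Complex.conj_re, Complex.cpow_inv_two_re, RCLike.norm_conj]

lemma im_lowerSqrt {z : ℂ} (hz : z.im ≤ 0) : (lowerSqrt z).im = -√((‖z‖ - z.re) / 2) := by
  have hconj : 0 ≤ (conj z).im := by rwa [Complex.conj_im, neg_nonneg]
  rw [lowerSqrt, Complex.conj_im, Complex.sqrt, Complex.cpow_inv_two_im_eq_sqrt hconj,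
    RCLike.norm_conj, Complex.conj_re]

lemma continuousOn_lowerSqrt : ContinuousOn lowerSqrt {z | z.im ≤ 0} := by
  have hcont : Continuous fun z : ℂ =>
      (z.sqrt.re : ℂ) + ((-√((‖z‖ - z.re) / 2) : ℝ) : ℂ) * Complex.I := by
    have := continuous_re_sqrt
    fun_prop
  refine hcont.continuousOn.congr fun z hz => ?_
  simp only [← re_lowerSqrt, ← im_lowerSqrt hz, Complex.re_add_im]

lemma lowerSqrt_exp_mul_I {x : ℝ} (hx : x ∈ Ico (-π) π) :
    lowerSqrt (Complex.exp (x * Complex.I)) = Complex.exp ((x / 2 : ℝ) * Complex.I) := by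
  have hlog : Complex.log (Complex.exp ((-x : ℝ) * Complex.I)) = (-x : ℝ) * Complex.I :=
    Complex.log_exp (by simpa using hx.2) (by simpa using neg_le.1 hx.1)
  have hconj (y : ℝ) :
      conj (Complex.exp (y * Complex.I)) = Complex.exp ((-y : ℝ) * Complex.I) := by
    simp [← Complex.exp_conj]
  rw [lowerSqrt, hconj, Complex.sqrt, Complex.cpow_def_of_ne_zero (Complex.exp_ne_zero _), hlog,
    ← Complex.exp_conj]
  congr 1
  simp only [map_mul, Complex.conj_ofReal, Complex.conj_I, map_inv₀, map_ofNat]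
  push_cast
  ring

end SquareRoot

section Radicand

variable {α φ θ : ℝ}

/-- The function `e^{iθ} t^α - e^{iφ}` of `t` whose square root is integrated; the paper's case is
`φ = t₀(α)`. -/
noncomputable def radicand (α φ θ t : ℝ) : ℂ :=
  Complex.exp (Complex.I * (θ : ℂ)) * ((t ^ α : ℝ) : ℂ) - Complex.exp (Complex.I * (φ : ℂ))

lemma im_radicand (α φ θ t : ℝ) :
    (radicand α φ θ t).im = Real.sin θ * t ^ α - Real.sin φ := by
  simp [radicand, Complex.exp_im]

lemma norm_radicand_le (α φ θ : ℝ) {t : ℝ} (ht : 0 ≤ t) : ‖radicand α φ θ t‖ ≤ 1 + t ^ α := by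
  refine (norm_sub_le _ _).trans_eq ?_
  rw [norm_mul, mul_comm Complex.I, mul_comm Complex.I, Complex.norm_exp_ofReal_mul_I,
    Complex.norm_exp_ofReal_mul_I, Complex.norm_real, Real.norm_of_nonneg (by positivity), one_mul,
    add_comm]

lemma continuous_radicand (hα : 0 ≤ α) (φ : ℝ) :
    Continuous fun p : ℝ × ℝ => radicand α φ p.1 p.2 := by
  have := (Real.continuous_rpow_const hα).comp (continuous_snd (X := ℝ))
  unfold radicand
  fun_prop

/-- The point at which `t ↦ radicand α φ θ t` meets the real axis; `crossing α (t0 α)` is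
`Z0 α`. -/
noncomputable def crossing (α φ θ : ℝ) : ℝ := (Real.sin φ / Real.sin θ) ^ (1 / α)

lemma crossing_pos (hφ : 0 < Real.sin φ) (hθ : 0 < Real.sin θ) : 0 < crossing α φ θ :=
  Real.rpow_pos_of_pos (div_pos hφ hθ) _

lemma sin_mul_crossing_rpow (hα : α ≠ 0) (hφ : 0 ≤ Real.sin φ) (hθ : 0 < Real.sin θ) :
    Real.sin θ * crossing α φ θ ^ α = Real.sin φ := by
  rw [crossing, one_div, Real.rpow_inv_rpow (div_nonneg hφ hθ.le) hα, mul_div_cancel₀ _ hθ.ne']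

lemma im_radicand_nonpos (hα : 0 < α) (hφ : 0 ≤ Real.sin φ) (hθ : 0 < Real.sin θ) {t : ℝ}
    (ht : t ∈ Icc 0 (crossing α φ θ)) : (radicand α φ θ t).im ≤ 0 := by
  rw [im_radicand, ← sin_mul_crossing_rpow hα.ne' hφ hθ, sub_nonpos]
  gcongr
  exacts [ht.1, ht.2]

lemma continuousAt_crossing (hα : 0 ≤ α) (hθ : Real.sin θ ≠ 0) :
    ContinuousAt (crossing α φ) θ := by
  have hquot : ContinuousAt (fun x => Real.sin φ / Real.sin x) θ := by fun_prop (disch := exact hθ)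
  exact hquot.rpow_const (Or.inr (by positivity))

lemma tendsto_sin_nhdsLT_pi : Tendsto Real.sin (𝓝[<] π) (𝓝[>] 0) := by
  refine tendsto_nhdsWithin_iff.2
    ⟨(Real.sin_pi ▸ Real.continuous_sin.tendsto π).mono_left nhdsWithin_le_nhds, ?_⟩
  filter_upwards [Ioo_mem_nhdsLT Real.pi_pos] with θ hθ using Real.sin_pos_of_mem_Ioo hθ

lemma tendsto_crossing_atTop (hα : 0 < α) (hφ : 0 < Real.sin φ) :
    Tendsto (crossing α φ) (𝓝[<] π) atTop :=
  (tendsto_rpow_atTop (one_div_pos.2 hα)).comp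
    ((tendsto_inv_nhdsGT_zero.comp tendsto_sin_nhdsLT_pi).const_mul_atTop hφ)

end Radicand

section RootIntegral

variable {α φ θ : ℝ}

/-- The integral of the real part of the square root of the radicand from `0` to the crossing. It
uses the principal root, whose real part agrees with that of `lowerSqrt`. -/
noncomputable def rootIntegral (α φ θ : ℝ) : ℝ :=
  ∫ t in (0 : ℝ)..crossing α φ θ, (radicand α φ θ t).sqrt.re

lemma continuous_re_sqrt_radicand (hα : 0 ≤ α) (φ : ℝ) :
    Continuous fun p : ℝ × ℝ => (radicand α φ p.1 p.2).sqrt.re :=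
  continuous_re_sqrt.comp (continuous_radicand hα φ)

lemma continuousAt_rootIntegral (hα : 0 ≤ α) (hθ : Real.sin θ ≠ 0) :
    ContinuousAt (rootIntegral α φ) θ := by
  have hprimitive : Continuous fun p : ℝ × ℝ =>
      ∫ t in (0 : ℝ)..p.2, (radicand α φ p.1 t).sqrt.re :=
    intervalIntegral.continuous_parametric_primitive_of_continuous
      (f := fun θ t => (radicand α φ θ t).sqrt.re) (continuous_re_sqrt_radicand hα φ)
  exact hprimitive.continuousAt.comp (f := fun x => (x, crossing α φ x))
    (continuousAt_id.prodMk (continuousAt_crossing hα hθ))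

lemma integral_neg_im_radicand (hα : 0 < α) (hφ : 0 < Real.sin φ) (hθ : 0 < Real.sin θ) :
    ∫ t in (0 : ℝ)..crossing α φ θ, -(radicand α φ θ t).im
      = Real.sin φ * (α / (α + 1)) * crossing α φ θ := by
  have hZ : 0 < crossing α φ θ := crossing_pos hφ hθ
  have hpow : IntervalIntegrable (fun t : ℝ => Real.sin θ * t ^ α) volume 0 (crossing α φ θ) :=
    (intervalIntegral.intervalIntegrable_rpow' (by linarith)).const_mul _
  simp only [im_radicand, neg_sub]
  rw [intervalIntegral.integral_sub intervalIntegrable_const hpow, intervalIntegral.integral_const,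
    intervalIntegral.integral_const_mul, integral_rpow (Or.inl (by linarith)),
    Real.zero_rpow (by linarith), Real.rpow_add_one hZ.ne', smul_eq_mul]
  have hfrac : α / (α + 1) = 1 - 1 / (α + 1) := by
    field_simp
    ring
  linear_combination -(crossing α φ θ / (α + 1)) * sin_mul_crossing_rpow hα.ne' hφ.le hθ
    - Real.sin φ * crossing α φ θ * hfrac

lemma sin_mul_crossing_le_rootIntegral (hα : 0 < α) (hφ : 0 < Real.sin φ)
    (hθ : 0 < Real.sin θ) :
    Real.sin φ * (α / (α + 1)) * crossing α φ θ
      ≤ 2 * √(1 + crossing α φ θ ^ α) * rootIntegral α φ θ := by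
  have hpointwise : ∀ t ∈ Icc 0 (crossing α φ θ), -(radicand α φ θ t).im
      ≤ 2 * √(1 + crossing α φ θ ^ α) * (radicand α φ θ t).sqrt.re := by
    intro t ht
    have hnorm : ‖radicand α φ θ t‖ ≤ 1 + crossing α φ θ ^ α :=
      (norm_radicand_le α φ θ ht.1).trans (by gcongr; exacts [ht.1, ht.2])
    calc -(radicand α φ θ t).im
        ≤ 2 * √‖radicand α φ θ t‖ * (radicand α φ θ t).sqrt.re :=
          (neg_le_abs _).trans (abs_im_le_two_mul_sqrt_norm_mul_re_sqrt _)
      _ ≤ 2 * √(1 + crossing α φ θ ^ α) * (radicand α φ θ t).sqrt.re := by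
          gcongr
          exact re_sqrt_nonneg _
  have him : Continuous fun t => -(radicand α φ θ t).im :=
    (Complex.continuous_im.comp ((continuous_radicand hα.le φ).comp (.prodMk_right θ))).neg
  have hre : Continuous fun t => (radicand α φ θ t).sqrt.re :=
    (continuous_re_sqrt_radicand hα.le φ).comp (.prodMk_right θ)
  rw [← integral_neg_im_radicand hα hφ hθ, rootIntegral, ← intervalIntegral.integral_const_mul]
  exact intervalIntegral.integral_mono_on (crossing_pos hφ hθ).le (him.intervalIntegrable _ _)
    ((hre.const_mul _).intervalIntegrable _ _) hpointwise

lemma rootIntegral_pos (hα : 0 < α) (hφ : 0 < Real.sin φ) (hθ : 0 < Real.sin θ) :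
    0 < rootIntegral α φ θ := by
  have hZ : 0 < crossing α φ θ := crossing_pos hφ hθ
  have hbound : 0 < 2 * √(1 + crossing α φ θ ^ α) * rootIntegral α φ θ :=
    lt_of_lt_of_le (by positivity) (sin_mul_crossing_le_rootIntegral hα hφ hθ)
  exact pos_of_mul_pos_right hbound (by positivity)

lemma tendsto_div_sqrt_one_add_rpow_atTop (hα0 : 0 ≤ α) (hα2 : α < 2) :
    Tendsto (fun x : ℝ => x / √(1 + x ^ α)) atTop atTop := by
  have hpow : Tendsto (fun x : ℝ => x ^ (1 - α / 2) / √2) atTop atTop :=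
    (tendsto_rpow_atTop (by linarith)).atTop_div_const (by positivity)
  refine tendsto_atTop_mono' _ ?_ hpow
  filter_upwards [eventually_ge_atTop 1] with x hx
  have hx0 : 0 < x := by linarith
  have hone : 1 ≤ x ^ α := Real.one_le_rpow hx hα0
  calc x ^ (1 - α / 2) / √2 = x / √(2 * x ^ α) := by
        rw [Real.rpow_sub hx0, Real.rpow_one, Real.sqrt_mul zero_le_two, Real.sqrt_eq_rpow (x ^ α),
          ← Real.rpow_mul hx0.le, mul_one_div, div_div, mul_comm]
    _ ≤ x / √(1 + x ^ α) := by
        gcongr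
        linarith

lemma tendsto_rootIntegral_atTop (hα0 : 0 < α) (hα2 : α < 2) (hφ : 0 < Real.sin φ) :
    Tendsto (rootIntegral α φ) (𝓝[<] π) atTop := by
  have hquot := (tendsto_div_sqrt_one_add_rpow_atTop hα0.le hα2).comp
    (tendsto_crossing_atTop hα0 hφ)
  have hconst : 0 < Real.sin φ * (α / (α + 1)) / 2 := by positivity
  refine tendsto_atTop_mono' _ ?_ (hquot.const_mul_atTop hconst)
  filter_upwards [Ioo_mem_nhdsLT Real.pi_pos] with θ hθ
  have hsin : 0 < Real.sin θ := Real.sin_pos_of_mem_Ioo hθ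
  have hZ : 0 < crossing α φ θ := crossing_pos hφ hsin
  rw [Function.comp_apply, div_mul_div_comm, div_le_iff₀' (by positivity)]
  exact sin_mul_crossing_le_rootIntegral hα0 hφ hsin

end RootIntegral

section Branch

variable {α φ θ : ℝ}

/-- `g` is a continuous branch of the square root of the radicand up to the crossing, normalized by
`g 0 = -i e^{iφ/2}`; for `φ = t₀(α)` this is the paper's `g_θ`. -/
structure IsRootBranch (α φ θ : ℝ) (g : ℝ → ℂ) : Prop where
  continuousOn : ContinuousOn g (Icc 0 (crossing α φ θ))
  sq_eq : ∀ t ∈ Icc 0 (crossing α φ θ), g t ^ 2 = radicand α φ θ t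
  apply_zero : g 0 = -Complex.I * Complex.exp (Complex.I * ((φ / 2 : ℝ) : ℂ))

lemma lowerSqrt_radicand_zero (hα : α ≠ 0) (hφ : φ ∈ Ico 0 (2 * π)) :
    lowerSqrt (radicand α φ θ 0) = -Complex.I * Complex.exp (Complex.I * ((φ / 2 : ℝ) : ℂ)) := by
  have hzero : radicand α φ θ 0 = Complex.exp ((φ - π : ℝ) * Complex.I) := by
    rw [radicand, Real.zero_rpow hα, Complex.ofReal_zero, mul_zero, zero_sub, Complex.ofReal_sub,
      sub_mul, Complex.exp_sub, Complex.exp_pi_mul_I, div_neg, div_one, mul_comm]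
  have hmem : φ - π ∈ Ico (-π) π := ⟨by linarith [hφ.1], by linarith [hφ.2]⟩
  have hhalf : (((φ - π) / 2 : ℝ) : ℂ) * Complex.I
      = -π / 2 * Complex.I + Complex.I * ((φ / 2 : ℝ) : ℂ) := by
    push_cast
    ring
  rw [hzero, lowerSqrt_exp_mul_I hmem, hhalf, Complex.exp_add, Complex.exp_neg_pi_div_two_mul_I]

lemma isRootBranch_lowerSqrt (hα : 0 < α) (hφ : φ ∈ Icc 0 π) (hθ : 0 < Real.sin θ) :
    IsRootBranch α φ θ fun t => lowerSqrt (radicand α φ θ t) where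
  continuousOn := continuousOn_lowerSqrt.comp
    ((continuous_radicand hα.le φ).comp (.prodMk_right θ)).continuousOn
    fun _ ht => im_radicand_nonpos hα (Real.sin_nonneg_of_mem_Icc hφ) hθ ht
  sq_eq _ _ := sq_lowerSqrt _
  apply_zero := lowerSqrt_radicand_zero hα.ne' ⟨hφ.1, by linarith [hφ.2, Real.pi_pos]⟩

lemma re_integral_lowerSqrt_radicand (hα : 0 < α) (hφ : φ ∈ Ioo 0 π) (hθ : 0 < Real.sin θ) :
    (∫ t in (0 : ℝ)..crossing α φ θ, lowerSqrt (radicand α φ θ t)).re = rootIntegral α φ θ := by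
  have hZ : 0 ≤ crossing α φ θ := (crossing_pos (Real.sin_pos_of_mem_Ioo hφ) hθ).le
  have hint : IntervalIntegrable (fun t => lowerSqrt (radicand α φ θ t)) volume 0
      (crossing α φ θ) :=
    (isRootBranch_lowerSqrt hα (Ioo_subset_Icc_self hφ) hθ).continuousOn
      |>.intervalIntegrable_of_Icc hZ
  simpa only [rootIntegral, Complex.reCLM_apply, re_lowerSqrt] using
    (Complex.reCLM.intervalIntegral_comp_comm hint).symm

end Branch

section Rho

variable {α φ θ : ℝ}

/-- The function `ρ_α(θ)` of the paper, for an arbitrary angle `φ` in place of `t₀(α)` and with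
`Re ∫ g_θ` written as `rootIntegral`. -/
noncomputable def rho (α φ θ : ℝ) : ℝ :=
  rootIntegral α φ θ - 2 * Real.sin (θ / α) * ∫ ξ in (0 : ℝ)..1, √(1 - ξ ^ α)

lemma tendsto_rho_atTop (hα0 : 0 < α) (hα2 : α < 2) (hφ : 0 < Real.sin φ) :
    Tendsto (rho α φ) (𝓝[<] π) atTop := by
  have hcont : Continuous fun θ => -(2 * Real.sin (θ / α) * ∫ ξ in (0 : ℝ)..1, √(1 - ξ ^ α)) := by
    fun_prop
  exact ((tendsto_rootIntegral_atTop hα0 hα2 hφ).atTop_add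
    ((hcont.tendsto π).mono_left nhdsWithin_le_nhds)).congr fun θ => (sub_eq_add_neg _ _).symm

lemma continuousAt_rho (hα : 0 ≤ α) (hθ : Real.sin θ ≠ 0) : ContinuousAt (rho α φ) θ :=
  (continuousAt_rootIntegral hα hθ).sub (by fun_prop)

lemma rho_pi_mul_pos (hα0 : 0 < α) (hα1 : α < 1) (hφ : 0 < Real.sin φ) : 0 < rho α φ (π * α) := by
  rw [rho, mul_div_cancel_right₀ _ hα0.ne', Real.sin_pi, mul_zero, zero_mul, sub_zero]
  exact rootIntegral_pos hα0 hφ (Real.sin_pos_of_mem_Ioo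
    ⟨by positivity, mul_lt_of_lt_one_right Real.pi_pos hα1⟩)

end Rho

theorem stmt18_general {α φ : ℝ} (hα0 : 0 < α) (hα2 : α < 2)
    (hφ : φ ∈ Ioo 0 (min π (π * α))) (ρ : ℝ → ℝ)
    (hρ : ∀ θ ∈ Ico φ (min π (π * α)), ∀ g : ℝ → ℂ, IsRootBranch α φ θ g →
      ρ θ = (∫ t in (0 : ℝ)..crossing α φ θ, g t).re
        - 2 * Real.sin (θ / α) * ∫ ξ in (0 : ℝ)..1, √(1 - ξ ^ α)) :
    (1 ≤ α → Tendsto ρ (𝓝[<] π) atTop) ∧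
    (α < 1 → ∃ L : ℝ, 0 < L ∧ Tendsto ρ (𝓝[<] (π * α)) (𝓝 L)) ∧
    (∃ θ ∈ Ico φ (min π (π * α)), 0 < ρ θ) := by
  have hφπ : φ ∈ Ioo 0 π := ⟨hφ.1, hφ.2.trans_le (min_le_left _ _)⟩
  have hsinφ : 0 < Real.sin φ := Real.sin_pos_of_mem_Ioo hφπ
  have hmem : ∀ᶠ θ in 𝓝[<] (min π (π * α)), θ ∈ Ico φ (min π (π * α)) := Ico_mem_nhdsLT hφ.2
  have hρ_eq : rho α φ =ᶠ[𝓝[<] (min π (π * α))] ρ := by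
    filter_upwards [hmem] with θ hθ
    have hsinθ : 0 < Real.sin θ := Real.sin_pos_of_mem_Ioo
      ⟨hφ.1.trans_le hθ.1, hθ.2.trans_le (min_le_left _ _)⟩
    rw [hρ θ hθ _ (isRootBranch_lowerSqrt hα0 (Ioo_subset_Icc_self hφπ) hsinθ),
      re_integral_lowerSqrt_radicand hα0 hφπ hsinθ, rho]
  rcases le_or_gt 1 α with hα | hα
  · rw [min_eq_left (le_mul_of_one_le_right Real.pi_pos.le hα)] at hmem hρ_eq ⊢
    have hlim : Tendsto ρ (𝓝[<] π) atTop := (tendsto_rho_atTop hα0 hα2 hsinφ).congr' hρ_eq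
    exact ⟨fun _ => hlim, fun h => absurd hα h.not_ge,
      (hmem.and (hlim.eventually_gt_atTop 0)).exists⟩
  · have hlt : π * α < π := mul_lt_of_lt_one_right Real.pi_pos hα
    rw [min_eq_right hlt.le] at hmem hρ_eq ⊢
    have hsin : Real.sin (π * α) ≠ 0 := (Real.sin_pos_of_mem_Ioo ⟨by positivity, hlt⟩).ne'
    have hpos : 0 < rho α φ (π * α) := rho_pi_mul_pos hα0 hα hsinφ
    have hlim : Tendsto ρ (𝓝[<] (π * α)) (𝓝 (rho α φ (π * α))) :=
      ((continuousAt_rho hα0.le hsin).tendsto.mono_left nhdsWithin_le_nhds).congr' hρ_eq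
    exact ⟨fun h => absurd hα h.not_gt, fun _ => ⟨_, hpos, hlim⟩,
      (hmem.and (hlim.eventually_const_lt hpos)).exists⟩

lemma t0_mem_Ioo {α : ℝ} (hα0 : 0 < α) (hα2 : α < 2) : t0 α ∈ Ioo 0 (min π (π * α)) := by
  have hpos : 0 < π * α := by positivity
  refine ⟨by unfold t0; positivity, lt_min ?_ ?_⟩
  all_goals
    rw [t0, div_lt_iff₀ (by linarith)]
    nlinarith [Real.pi_pos]

/-- if `1 ≤ α < 2`, then `ρ_α(θ) → +∞` as `θ → π⁻`; if `0 < α < 1`, then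
`ρ_α(θ)` tends to a finite, strictly positive limit as `θ → (πα)⁻`; in particular `ρ_α`
takes strictly positive values on `[t₀(α), min(π, πα))`. -/
theorem stmt18 (α : ℝ) (hα0 : 0 < α) (hα2 : α < 2) (ρ : ℝ → ℝ)
    (hρ : ∀ θ ∈ Set.Ico (t0 α) (min Real.pi (Real.pi * α)), ∀ g : ℝ → ℂ,
      ContinuousOn g (Set.Icc 0 (Z0 α θ)) →
      (∀ t ∈ Set.Icc (0 : ℝ) (Z0 α θ),
        g t ^ 2 = Complex.exp (Complex.I * (θ : ℂ)) * ((t ^ α : ℝ) : ℂ)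
          - Complex.exp (Complex.I * ((t0 α : ℝ) : ℂ))) →
      g 0 = -Complex.I * Complex.exp (Complex.I * ((t0 α / 2 : ℝ) : ℂ)) →
      ρ θ = (∫ t in (0 : ℝ)..(Z0 α θ), g t).re
        - 2 * Real.sin (θ / α) * ∫ ξ in (0 : ℝ)..1, Real.sqrt (1 - ξ ^ α)) :
    (1 ≤ α → Tendsto ρ (nhdsWithin Real.pi (Set.Iio Real.pi)) atTop) ∧
    (α < 1 → ∃ L : ℝ, 0 < L ∧
      Tendsto ρ (nhdsWithin (Real.pi * α) (Set.Iio (Real.pi * α))) (nhds L)) ∧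
    (∃ θ ∈ Set.Ico (t0 α) (min Real.pi (Real.pi * α)), 0 < ρ θ) :=
  stmt18_general hα0 hα2 (t0_mem_Ioo hα0 hα2) ρ fun θ hθ g hg =>
    hρ θ hθ g hg.continuousOn hg.sq_eq hg.apply_zero
end
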